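/- (Remainder estimate for potentials homogeneous of degree β, from the proof of Theorem 5) Let β ∈ (1, 3/2) and let V^{(L)} ∈ C^∞(ℝ^d;ℝ) satisfy V^{(L)}(x) = |x|^β·V^{(L)}(x/|x|) for all |x| ≥ 1. Fix t > 0 and define F(t,ξ) = ∫₀ᵗ V^{(L)}(sξ) ds − ( t^{1+β}/(1+β) )·V^{(L)}(ξ). Then for every multi-index α ∈ ℤ₊^d there is C_α > 0 such that |∂_ξ^α F(t,ξ)| ≤ C_α ⟨ξ⟩^{−1−|α|} for all ξ ∈ ℝ^d. -/

import Mathlib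

open Filter MeasureTheory
open scoped Topology BigOperators

noncomputable section

abbrev E (d : ℕ) := EuclideanSpace ℝ (Fin d)

/-- Japanese bracket `⟨x⟩ = (1+|x|²)^{1/2}`. -/
def jap {d : ℕ} (x : E d) : ℝ := Real.sqrt (1 + ‖x‖ ^ 2)

/-- Japanese bracket of a real number. -/
def japr (t : ℝ) : ℝ := Real.sqrt (1 + t ^ 2)

/-- The kinetic energy symbol `k(x,ξ) = (1/2) Σ a_{mn}(x) ξ_m ξ_n`. -/
def kk {d : ℕ} (a : Fin d → Fin d → E d → ℝ) (x ξ : E d) : ℝ :=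
  (1 / 2) * ∑ m : Fin d, ∑ n : Fin d, a m n x * ξ m * ξ n

/-- `(y, η)` solves the Hamilton equations for the Hamiltonian `h`. -/
def IsHamiltonSol {d : ℕ} (h : E d → E d → ℝ) (y η : ℝ → E d) : Prop :=
  ∀ t : ℝ, HasDerivAt y (gradient (h (y t)) (η t)) t ∧
    HasDerivAt η (-gradient (fun x => h x (η t)) (y t)) t

/-!
A change of variables writes the integral of `s ↦ V (s • l • x)` over `[0, t]` as `l⁻¹` times the
integral of `s ↦ V (s • x)` over `[0, t * l]`. For `x` large, `V` is homogeneous along the part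
`[t, t * l]` of that ray; once the multiple of `V (l • x)` is subtracted, all that remains of this
part is `-l⁻¹` times the multiple of `V x` in the remainder at `x`. So the remainder is homogeneous
of degree `-1` outside a ball, its `n`-th derivative is homogeneous of degree `-1 - n` there, and
such a function is controlled by its values on a compact ball.
-/

theorem exists_eventually_norm_le_of_isCompact {X Y G : Type*} [TopologicalSpace X]
    [TopologicalSpace Y] [SeminormedAddCommGroup G] {f : X → Y → G} (hf : Continuous f.uncurry)
    (x₀ : X) {K : Set Y} (hK : IsCompact K) : ∃ C, ∀ᶠ x in 𝓝 x₀, ∀ y ∈ K, ‖f x y‖ ≤ C := by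
  obtain ⟨C, hC⟩ := hK.exists_bound_of_continuousOn (hf.uncurry_left x₀).continuousOn
  refine ⟨C + 1, hK.eventually_forall_of_forall_eventually fun y hy => ?_⟩
  have hlt : ‖f.uncurry (x₀, y)‖ < C + 1 := (hC y hy).trans_lt (lt_add_one C)
  exact (hf.norm.continuousAt.eventually_lt_const hlt).mono fun _ => le_of_lt

section ParametricIntegral

variable {H G : Type*} [NormedAddCommGroup H] [NormedSpace ℝ H] [NormedAddCommGroup G]
  [NormedSpace ℝ G] {μ : Measure ℝ}

theorem intervalIntegral_curryLeft [CompleteSpace G] {m : ℕ} (q : ℝ → H [×m + 1]→L[ℝ] G)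
    (a b : ℝ) : ∫ s in a..b, (q s).curryLeft ∂μ = (∫ s in a..b, q s ∂μ).curryLeft :=
  LinearIsometry.intervalIntegral_comp_comm (𝕜 := ℝ) (E := H [×m + 1]→L[ℝ] G)
    (F := H →L[ℝ] H [×m]→L[ℝ] G)
    (continuousMultilinearCurryLeftEquiv ℝ (fun _ : Fin (m + 1) => H) G).toLinearIsometry q

variable [IsLocallyFiniteMeasure μ]

theorem hasFDerivAt_intervalIntegral_of_continuous {f : H → ℝ → G} {f' : H → ℝ → H →L[ℝ] G}
    (hf : ∀ x, Continuous (f x)) (hf' : Continuous f'.uncurry)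
    (hderiv : ∀ x s, HasFDerivAt (f · s) (f' x s) x) (a b : ℝ) (x₀ : H) :
    HasFDerivAt (fun x => ∫ s in a..b, f x s ∂μ) (∫ s in a..b, f' x₀ s ∂μ) x₀ := by
  obtain ⟨C, hC⟩ := exists_eventually_norm_le_of_isCompact hf' x₀ (isCompact_uIcc (a := a) (b := b))
  exact intervalIntegral.hasFDerivAt_integral_of_dominated_of_fderiv_le (bound := fun _ => C) hC
    (.of_forall fun x => (hf x).aestronglyMeasurable)
    ((hf x₀).intervalIntegrable a b)
    (hf'.uncurry_left x₀).aestronglyMeasurable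
    (.of_forall fun s hs _ hx => hx s (Set.uIoc_subset_uIcc hs))
    intervalIntegrable_const
    (.of_forall fun s _ x _ => hderiv x s)

theorem hasFTaylorSeriesUpTo_intervalIntegral [CompleteSpace G] [NullSingletonClass μ]
    {n : WithTop ℕ∞} {f : H → ℝ → G} {p : H → ℝ → FormalMultilinearSeries ℝ H G}
    (hp : ∀ s, HasFTaylorSeriesUpTo n (f · s) (p · s))
    (hcont : ∀ m : ℕ, m ≤ n → Continuous fun z : H × ℝ => p z.1 z.2 m) (a b : ℝ) :
    HasFTaylorSeriesUpTo n (fun x => ∫ s in a..b, f x s ∂μ)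
      (fun x m => ∫ s in a..b, p x s m ∂μ) where
  zero_eq x := by
    let curry := continuousMultilinearCurryFin0 ℝ H G
    have hcurry := curry.toLinearIsometry.intervalIntegral_comp_comm
      (μ := μ) (a := a) (b := b) (p x · 0)
    exact hcurry.symm.trans (intervalIntegral.integral_congr fun s _ => (hp s).zero_eq x)
  fderiv m hm x := by
    have hm' : ((m + 1 : ℕ) : WithTop ℕ∞) ≤ n := ENat.add_one_natCast_le_withTop_of_lt hm
    have hcurry : Continuous fun z : H × ℝ => (p z.1 z.2 (m + 1)).curryLeft :=
      (continuousMultilinearCurryLeftEquiv ℝ (fun _ : Fin (m + 1) => H) G).continuous.comp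
        (hcont (m + 1) hm')
    rw [← intervalIntegral_curryLeft]
    exact hasFDerivAt_intervalIntegral_of_continuous (f' := fun x s => (p x s (m + 1)).curryLeft)
      (fun x => (hcont m hm.le).comp (.prodMk_right x)) hcurry
      (fun x s => (hp s).fderiv m hm x) a b x
  cont m hm :=
    intervalIntegral.continuous_parametric_intervalIntegral_of_continuous'
      (f := fun x s => p x s m) (hcont m hm) a b

theorem contDiff_intervalIntegral [CompleteSpace G] [NullSingletonClass μ] {n : ℕ∞}
    {f : H → ℝ → G} (hf : ContDiff ℝ n f.uncurry) (a b : ℝ) :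
    ContDiff ℝ n fun x => ∫ s in a..b, f x s ∂μ := by
  let slice (s : ℝ) : H →ᴬ[ℝ] H × ℝ :=
    (ContinuousLinearMap.inl ℝ H ℝ).toContinuousAffineMap + .const ℝ H (0, s)
  have hslice (x : H) (s : ℝ) : slice s x = (x, s) := by simp [slice]
  have hlin (s : ℝ) : (slice s).contLinear = .inl ℝ H ℝ := by ext <;> simp [slice]
  have htaylor (s : ℝ) : HasFTaylorSeriesUpTo n (f · s) fun x k =>
      (ftaylorSeries ℝ f.uncurry (x, s) k).compContinuousLinearMap
        fun _ => ContinuousLinearMap.inl ℝ H ℝ := by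
    have h := (hasFTaylorSeriesUpToOn_univ_iff.2 hf.ftaylorSeries).comp_continuousAffineMap
      (slice s)
    refine hasFTaylorSeriesUpToOn_univ_iff.1 ?_
    simpa only [Set.preimage_univ, Function.comp_def, hslice, hlin, Function.uncurry_apply_pair]
      using h
  refine (hasFTaylorSeriesUpTo_intervalIntegral htaylor (fun m hm => ?_) a b).contDiff
  exact (ContinuousMultilinearMap.compContinuousLinearMapL
    fun _ => ContinuousLinearMap.inl ℝ H ℝ).continuous.comp (hf.continuous_iteratedFDeriv hm)

end ParametricIntegral

theorem sqrt_one_add_norm_smul_sq_le {H : Type*} [SeminormedAddCommGroup H] [NormedSpace ℝ H]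
    {l : ℝ} (hl : 1 ≤ l) (x : H) : √(1 + ‖l • x‖ ^ 2) ≤ l * √(1 + ‖x‖ ^ 2) := by
  have hl0 : 0 ≤ l := zero_le_one.trans hl
  rw [Real.sqrt_le_left (by positivity), norm_smul, Real.norm_of_nonneg hl0, mul_pow, mul_pow,
    Real.sq_sqrt (by positivity)]
  linarith [one_le_pow₀ hl (n := 2)]

/-- `f` is positively homogeneous of degree `γ` on the complement of the closed ball of radius `R`.
Only dilations by factors `l ≥ 1` are considered, as they preserve this set. -/
def IsHomogeneousOutside {H G : Type*} [Norm H] [SMul ℝ H] [SMul ℝ G] (R γ : ℝ) (f : H → G) :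
    Prop :=
  ∀ ⦃x : H⦄, R < ‖x‖ → ∀ ⦃l : ℝ⦄, 1 ≤ l → f (l • x) = l ^ γ • f x

/-- The remainder `F(t, ξ) = ∫₀ᵗ V(sξ) ds - t^{1+β}/(1+β) V(ξ)`, which measures by how much the
integral deviates from its value for `V` homogeneous of degree `β` on all of `H`. -/
def dilationRemainder {H G : Type*} [SMul ℝ H] [NormedAddCommGroup G] [NormedSpace ℝ G]
    (β t : ℝ) (V : H → G) (ξ : H) : G :=
  (∫ s in (0 : ℝ)..t, V (s • ξ)) - (t ^ (1 + β) / (1 + β)) • V ξ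

section Homogeneous

variable {H G : Type*} [NormedAddCommGroup H] [NormedSpace ℝ H]

section MulAction

variable [MulAction ℝ G] {R γ : ℝ} {f : H → G}

theorem isHomogeneousOutside_of_eq_norm_rpow_smul
    (h : ∀ x, R < ‖x‖ → f x = ‖x‖ ^ γ • f (‖x‖⁻¹ • x)) : IsHomogeneousOutside R γ f := by
  intro x hx l hl
  have hl0 : 0 < l := one_pos.trans_le hl
  have hnorm : ‖l • x‖ = l * ‖x‖ := by rw [norm_smul, Real.norm_of_nonneg hl0.le]
  have hlx : R < ‖l • x‖ := hnorm ▸ hx.trans_le (le_mul_of_one_le_left (norm_nonneg x) hl)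
  have hdir : (l * ‖x‖)⁻¹ • l • x = ‖x‖⁻¹ • x := by
    rw [smul_smul, mul_inv_rev, inv_mul_cancel_right₀ hl0.ne']
  rw [h _ hlx, hnorm, hdir, Real.mul_rpow hl0.le (norm_nonneg x), mul_smul, ← h x hx]

namespace IsHomogeneousOutside

theorem smul_eq_of_pos (hf : IsHomogeneousOutside R γ f) {c : ℝ} (hc : 0 < c) {x : H}
    (hx : R < ‖x‖) (hcx : R < ‖c • x‖) : f (c • x) = c ^ γ • f x := by
  rcases le_total 1 c with hc1 | hc1
  · exact hf hx hc1
  · have h := hf hcx (one_le_inv₀ hc |>.2 hc1)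
    rw [inv_smul_smul₀ hc.ne', Real.inv_rpow hc.le] at h
    rw [h, smul_inv_smul₀ (Real.rpow_pos_of_pos hc γ).ne']

theorem exists_eq_smul (hf : IsHomogeneousOutside R γ f) {ρ : ℝ} (hρ : 0 < ρ) (hR : R < ρ)
    (x : H) : ∃ l : ℝ, 1 ≤ l ∧ ∃ y, ‖y‖ ≤ ρ ∧ x = l • y ∧ f x = l ^ γ • f y := by
  rcases le_or_gt ‖x‖ ρ with hx | hx
  · exact ⟨1, le_rfl, x, hx, by simp, by simp⟩
  · have hl : 1 ≤ ‖x‖ / ρ := (one_le_div hρ).2 hx.le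
    have hl0 : 0 < ‖x‖ / ρ := one_pos.trans_le hl
    have hy : ‖(‖x‖ / ρ)⁻¹ • x‖ = ρ := by
      rw [norm_smul, Real.norm_of_nonneg (by positivity), inv_div,
        div_mul_cancel₀ _ (hρ.trans hx).ne']
    have hxy : x = (‖x‖ / ρ) • (‖x‖ / ρ)⁻¹ • x := (smul_inv_smul₀ hl0.ne' x).symm
    exact ⟨‖x‖ / ρ, hl, (‖x‖ / ρ)⁻¹ • x, hy.le, hxy, by
      conv_lhs => rw [hxy]
      exact hf (hR.trans_eq hy.symm) hl⟩

end IsHomogeneousOutside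

end MulAction

variable [NormedAddCommGroup G] [NormedSpace ℝ G] {R γ β t : ℝ} {f V : H → G}

namespace IsHomogeneousOutside

theorem intervalIntegral_smul [CompleteSpace G] (hV : IsHomogeneousOutside R β V) (hβ : β ≠ -1)
    {a b : ℝ} (ha : 0 < a) (hab : a ≤ b) {x : H} (hx : R < ‖x‖) (hax : R < a * ‖x‖) :
    ∫ s in a..b, V (s • x) = ((b ^ (β + 1) - a ^ (β + 1)) / (β + 1)) • V x := by
  have hpow : ∀ s ∈ Set.uIcc a b, V (s • x) = s ^ β • V x := fun s hs => by
    rw [Set.uIcc_of_le hab] at hs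
    have hs0 : 0 < s := ha.trans_le hs.1
    refine hV.smul_eq_of_pos hs0 hx ?_
    rw [norm_smul, Real.norm_of_nonneg hs0.le]
    exact hax.trans_le (mul_le_mul_of_nonneg_right hs.1 (norm_nonneg x))
  rw [intervalIntegral.integral_congr hpow, intervalIntegral.integral_smul_const,
    integral_rpow (.inr ⟨hβ, Set.notMem_uIcc_of_lt ha (ha.trans_le hab)⟩)]

protected theorem dilationRemainder [CompleteSpace G] (hV : IsHomogeneousOutside R β V)
    (hcont : Continuous V) (hβ : β ≠ -1) (ht : 0 < t) :
    IsHomogeneousOutside (max R (R / t)) (-1) (dilationRemainder β t V) := by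
  intro x hx l hl
  obtain ⟨hRx, hRtx⟩ := max_lt_iff.1 hx
  rw [div_lt_iff₀' ht] at hRtx
  have hl0 : 0 < l := one_pos.trans_le hl
  have hint (a b : ℝ) : IntervalIntegrable (fun s : ℝ => V (s • x)) volume a b :=
    (hcont.comp (continuous_id.smul continuous_const)).intervalIntegrable a b
  have hsubst : ∫ s in (0 : ℝ)..t, V (s • l • x) = l⁻¹ • ∫ s in (0 : ℝ)..t * l, V (s • x) := by
    simpa only [smul_smul, zero_mul] using
      intervalIntegral.integral_comp_mul_right (a := 0) (b := t) (fun s => V (s • x)) hl0.ne'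
  have htail : ∫ s in t..t * l, V (s • x)
      = (((t * l) ^ (β + 1) - t ^ (β + 1)) / (β + 1)) • V x :=
    hV.intervalIntegral_smul hβ ht (le_mul_of_one_le_right ht.le hl) hRx hRtx
  have hcoeff : l⁻¹ * (((t * l) ^ (β + 1) - t ^ (β + 1)) / (β + 1)) -
      t ^ (1 + β) / (1 + β) * l ^ β = -(l⁻¹ * (t ^ (1 + β) / (1 + β))) := by
    rw [Real.mul_rpow ht.le hl0.le, Real.rpow_add_one hl0.ne', add_comm 1 β]
    field_simp
    ring
  calc dilationRemainder β t V (l • x)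
      = l⁻¹ • (∫ s in (0 : ℝ)..t, V (s • x)) +
          (l⁻¹ * (((t * l) ^ (β + 1) - t ^ (β + 1)) / (β + 1)) -
            t ^ (1 + β) / (1 + β) * l ^ β) • V x := by
        rw [dilationRemainder, hsubst, hV hRx hl,
          ← intervalIntegral.integral_add_adjacent_intervals (hint 0 t) (hint t (t * l)), htail]
        module
    _ = l ^ (-1 : ℝ) • dilationRemainder β t V x := by
        rw [hcoeff, Real.rpow_neg_one, dilationRemainder]
        module

protected theorem iteratedFDeriv {n : ℕ} (hf : IsHomogeneousOutside R γ f)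
    (hdiff : ContDiff ℝ n f) : IsHomogeneousOutside R (γ - n) (iteratedFDeriv ℝ n f) := by
  intro x hx l hl
  have hl0 : 0 < l := one_pos.trans_le hl
  have hev : (fun y => f (l • y)) =ᶠ[𝓝 x] l ^ γ • f := by
    filter_upwards [continuous_norm.continuousAt.eventually_const_lt hx] with y hy
    exact hf hy hl
  have hderiv := (hev.iteratedFDeriv ℝ n).eq_of_nhds
  rw [iteratedFDeriv_comp_const_smul l hdiff, iteratedFDeriv_const_smul_apply hdiff.contDiffAt]
    at hderiv
  rw [Real.rpow_sub_natCast hl0.ne', div_eq_inv_mul, mul_smul, ← hderiv,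
    inv_smul_smul₀ (pow_pos hl0 n).ne']

theorem exists_norm_le [ProperSpace H] (hf : IsHomogeneousOutside R γ f) (hcont : Continuous f)
    (hγ : γ ≤ 0) : ∃ C > 0, ∀ x, ‖f x‖ ≤ C * √(1 + ‖x‖ ^ 2) ^ γ := by
  have hpos (x : H) : 0 < √(1 + ‖x‖ ^ 2) := by positivity
  have hratio : Continuous fun x => ‖f x‖ / √(1 + ‖x‖ ^ 2) ^ γ :=
    hcont.norm.div ((by fun_prop : Continuous fun x : H => √(1 + ‖x‖ ^ 2)).rpow_const
      fun x => .inl (hpos x).ne') fun x => (Real.rpow_pos_of_pos (hpos x) γ).ne'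
  let ρ := max R 0 + 1
  obtain ⟨C, hC⟩ := (isCompact_closedBall (0 : H) ρ).bddAbove_image hratio.continuousOn
  have hball {y : H} (hy : ‖y‖ ≤ ρ) : ‖f y‖ ≤ max C 1 * √(1 + ‖y‖ ^ 2) ^ γ :=
    (div_le_iff₀ (Real.rpow_pos_of_pos (hpos y) γ)).1 <| le_max_of_le_left <|
      hC ⟨y, by simpa using hy, rfl⟩
  refine ⟨max C 1, by positivity, fun x => ?_⟩
  obtain ⟨l, hl, y, hy, rfl, hfy⟩ :=
    hf.exists_eq_smul (ρ := ρ) (by positivity) ((le_max_left R 0).trans_lt (lt_add_one _)) x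
  have hl0 : 0 < l := one_pos.trans_le hl
  calc ‖f (l • y)‖ = l ^ γ * ‖f y‖ := by
        rw [hfy, norm_smul, Real.norm_of_nonneg (Real.rpow_nonneg hl0.le γ)]
    _ ≤ l ^ γ * (max C 1 * √(1 + ‖y‖ ^ 2) ^ γ) := by gcongr; exact hball hy
    _ = max C 1 * (l * √(1 + ‖y‖ ^ 2)) ^ γ := by
        rw [Real.mul_rpow hl0.le (hpos y).le, mul_left_comm]
    _ ≤ max C 1 * √(1 + ‖l • y‖ ^ 2) ^ γ := by
        gcongr ?_ * ?_
        exact Real.rpow_le_rpow_of_nonpos (hpos _) (sqrt_one_add_norm_smul_sq_le hl y) hγ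

end IsHomogeneousOutside

theorem contDiff_dilationRemainder [CompleteSpace G] {n : ℕ∞} (hV : ContDiff ℝ n V) (β t : ℝ) :
    ContDiff ℝ n (dilationRemainder β t V) :=
  (contDiff_intervalIntegral (f := fun x s => V (s • x))
    (hV.comp (contDiff_snd.smul contDiff_fst)) 0 t).sub (hV.const_smul _)

theorem stmt18_general [ProperSpace H] [CompleteSpace G] {n : ℕ} (hV : ContDiff ℝ n V)
    (hhom : IsHomogeneousOutside R β V) (hβ : β ≠ -1) (ht : 0 < t) :
    ∃ C > 0, ∀ ξ, ‖iteratedFDeriv ℝ n (dilationRemainder β t V) ξ‖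
      ≤ C * √(1 + ‖ξ‖ ^ 2) ^ (-1 - (n : ℝ)) := by
  have hF : ContDiff ℝ n (dilationRemainder β t V) := contDiff_dilationRemainder (n := n) hV β t
  exact ((hhom.dilationRemainder hV.continuous hβ ht).iteratedFDeriv hF).exists_norm_le
    (hF.continuous_iteratedFDeriv le_rfl) (by linarith [n.cast_nonneg (α := ℝ)])

end Homogeneous

/-- Remainder estimate for potentials homogeneous of degree `β` (proof of Theorem 5). -/
theorem stmt18 (d : ℕ) (hd : 1 ≤ d) (β : ℝ) (hβ1 : 1 < β) (hβ2 : β < 3 / 2)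
    (VL : E d → ℝ) (hVL : ContDiff ℝ (⊤ : ℕ∞) VL)
    (hhom : ∀ x : E d, 1 ≤ ‖x‖ → VL x = ‖x‖ ^ β * VL (‖x‖⁻¹ • x))
    (t : ℝ) (ht : 0 < t) :
    ∀ n : ℕ, ∃ C > 0, ∀ ξ : E d,
      ‖iteratedFDeriv ℝ n
          (fun ξ' => (∫ s in (0 : ℝ)..t, VL (s • ξ')) - t ^ (1 + β) / (1 + β) * VL ξ') ξ‖
        ≤ C * jap ξ ^ (-1 - (n : ℝ)) := by
  intro n
  exact stmt18_general (hVL.of_le (by exact_mod_cast le_top))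
    (isHomogeneousOutside_of_eq_norm_rpow_smul fun x hx => hhom x hx.le)
    (by linarith) ht
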